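/- arXiv:2403.13697 — 4 statements merged into one kernel-verified Lean document; each statement's English description precedes it below -/
import Mathlib

section
/- Let A be a (not necessarily associative) algebra over a field F of characteristic different from 2, let μ ∈ Cent(A), and let Q : A → A be a linear map satisfying Q(x)Q(y) − Q(Q(x)y + xQ(y)) = −μ(μ(xy)) for all x,y ∈ A. Then the linear map R = (1/2)(Q − μ) is a Rota–Baxter operator of weight μ. -/
/-- `μ` is a centrum map of the (not necessarily associative) algebra `(A, mul)`. -/
def IsCentrumMap {F A : Type*} [Field F] [AddCommGroup A] [Module F A]
    (mul : A →ₗ[F] A →ₗ[F] A) (μ : A →ₗ[F] A) : Prop :=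
  ∀ x y : A, μ (mul x y) = mul (μ x) y ∧ μ (mul x y) = mul x (μ y)

/-- `R` is a Rota–Baxter operator of weight `μ` on `(A, mul)`. -/
def IsRotaBaxterOp {F A : Type*} [Field F] [AddCommGroup A] [Module F A]
    (mul : A →ₗ[F] A →ₗ[F] A) (μ R : A →ₗ[F] A) : Prop :=
  ∀ x y : A, mul (R x) (R y) = R (mul (R x) y + mul x (R y) + μ (mul x y))

/-!
Substitute `Q = 2R + μ`. The centrum law moves every `μ` outside the products, and what is left of
the equation for `Q` is four times the Rota–Baxter equation for `R`, so the two are equivalent as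
soon as `2` is invertible.
-/

/-- `Q` is a modified Rota–Baxter operator of weight `-μ²`. The definition takes `μ` rather than the
weight as its argument, since `μ` is what relates `Q` to a Rota–Baxter operator `R` by
`Q = 2R + μ`. -/
def IsModifiedRotaBaxterOp {F A : Type*} [Field F] [AddCommGroup A] [Module F A]
    (mul : A →ₗ[F] A →ₗ[F] A) (μ Q : A →ₗ[F] A) : Prop :=
  ∀ x y : A, mul (Q x) (Q y) - Q (mul (Q x) y + mul x (Q y)) = -μ (μ (mul x y))

section

variable {F A : Type*} [Field F] [AddCommGroup A] [Module F A]
  {mul : A →ₗ[F] A →ₗ[F] A} {μ : A →ₗ[F] A}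

namespace IsCentrumMap

theorem mul_apply_left (hμ : IsCentrumMap mul μ) (x y : A) : mul (μ x) y = μ (mul x y) :=
  (hμ x y).1.symm

theorem mul_apply_right (hμ : IsCentrumMap mul μ) (x y : A) : mul x (μ y) = μ (mul x y) :=
  (hμ x y).2.symm

theorem two_smul_add_mul_add_mul_two_smul_add (hμ : IsCentrumMap mul μ)
    (R : A →ₗ[F] A) (x y : A) :
    mul (((2 : F) • R + μ) x) y + mul x (((2 : F) • R + μ) y) =
      (2 : F) • (mul (R x) y + mul x (R y) + μ (mul x y)) := by
  simp only [LinearMap.add_apply, LinearMap.smul_apply, map_add, map_smul,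
    hμ.mul_apply_left, hμ.mul_apply_right]
  module

theorem two_smul_add_mul_two_smul_add (hμ : IsCentrumMap mul μ) (R : A →ₗ[F] A) (x y : A) :
    mul (((2 : F) • R + μ) x) (((2 : F) • R + μ) y) =
      (4 : F) • mul (R x) (R y) + (2 : F) • μ (mul (R x) y + mul x (R y)) + μ (μ (mul x y)) := by
  simp only [LinearMap.add_apply, LinearMap.smul_apply, map_add, map_smul,
    hμ.mul_apply_left, hμ.mul_apply_right]
  module

theorem modified_defect_eq_four_smul_defect (hμ : IsCentrumMap mul μ)
    (R : A →ₗ[F] A) (x y : A) :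
    mul (((2 : F) • R + μ) x) (((2 : F) • R + μ) y) -
        ((2 : F) • R + μ) (mul (((2 : F) • R + μ) x) y + mul x (((2 : F) • R + μ) y)) +
        μ (μ (mul x y)) =
      (4 : F) • (mul (R x) (R y) - R (mul (R x) y + mul x (R y) + μ (mul x y))) := by
  rw [hμ.two_smul_add_mul_add_mul_two_smul_add, hμ.two_smul_add_mul_two_smul_add]
  simp only [LinearMap.add_apply, LinearMap.smul_apply, map_add, map_smul]
  module

theorem isModifiedRotaBaxterOp_two_smul_add_iff (hμ : IsCentrumMap mul μ) (h2 : (2 : F) ≠ 0)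
    {R : A →ₗ[F] A} :
    IsModifiedRotaBaxterOp mul μ ((2 : F) • R + μ) ↔ IsRotaBaxterOp mul μ R := by
  have h4 : (4 : F) ≠ 0 := by
    rw [← two_add_two_eq_four, ← two_mul]
    exact mul_ne_zero h2 h2
  refine forall₂_congr fun x y ↦ ?_
  rw [eq_neg_iff_add_eq_zero, hμ.modified_defect_eq_four_smul_defect,
    smul_eq_zero_iff_right h4, sub_eq_zero]

end IsCentrumMap

end

/-- over a field of characteristic ≠ 2, if `Q` satisfies
`Q(x)Q(y) − Q(Q(x)y + xQ(y)) = −μ²(xy)` for a centrum map `μ`, then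
`R = ½(Q − μ)` is a Rota–Baxter operator of weight `μ`. -/
theorem statement4 {F A : Type*} [Field F] [AddCommGroup A] [Module F A]
    (h2 : (2 : F) ≠ 0)
    (mul : A →ₗ[F] A →ₗ[F] A) (μ Q : A →ₗ[F] A)
    (hμ : IsCentrumMap mul μ)
    (hQ : ∀ x y : A,
      mul (Q x) (Q y) - Q (mul (Q x) y + mul x (Q y)) = -μ (μ (mul x y))) :
    IsRotaBaxterOp mul μ ((2 : F)⁻¹ • (Q - μ)) := by
  refine (hμ.isModifiedRotaBaxterOp_two_smul_add_iff h2).mp ?_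
  rwa [smul_inv_smul₀ h2, sub_add_cancel]
end

section
/- Let g be a Lie algebra over a field F of characteristic different from 2 and let R : g → g be a linear map. Define [x,y]_R = [R(x),y] + [x,R(y)] and θ_R(x,y) = [R(x),R(y)] − R([R(x),y] + [x,R(y)]). Then the bracket [·,·]_R satisfies the Jacobi identity (equivalently, (g,[·,·]_R) is a Lie algebra, since [·,·]_R is automatically bilinear and alternating) if and only if [θ_R(x,y),z] + [θ_R(y,z),x] + [θ_R(z,x),y] = 0 for all x,y,z ∈ g. -/
/-!
Replacing `R [x, y]_R` by `[R x, R y] - θ_R(x, y)` in `[[x, y]_R, z]_R` leaves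
`-[θ_R(x, y), z]` and three double brackets, each with `R` applied to two of `x`, `y`, `z`.
Summed cyclically, these double brackets group into the Jacobi identities of
`(R x, R y, z)`, `(R y, R z, x)` and `(R z, R x, y)`, so the Jacobiator of `[·, ·]_R` is minus the
cyclic sum of `[θ_R(x, y), z]`.
-/

section RBracket

variable {L : Type*} [LieRing L]

theorem lie_jacobi_left (x y z : L) : ⁅⁅x, y⁆, z⁆ + ⁅⁅y, z⁆, x⁆ + ⁅⁅z, x⁆, y⁆ = 0 :=
  calc ⁅⁅x, y⁆, z⁆ + ⁅⁅y, z⁆, x⁆ + ⁅⁅z, x⁆, y⁆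
      = -(⁅x, ⁅y, z⁆⁆ + ⁅y, ⁅z, x⁆⁆ + ⁅z, ⁅x, y⁆⁆) := by
        rw [← lie_skew ⁅x, y⁆ z, ← lie_skew ⁅y, z⁆ x, ← lie_skew ⁅z, x⁆ y]; abel
    _ = 0 := by rw [lie_jacobi, neg_zero]

variable (R : L → L)

/-- The bracket `[x, y]_R = [R x, y] + [x, R y]` obtained by deforming the Lie bracket with `R`. -/
def rBracket (x y : L) : L := ⁅R x, y⁆ + ⁅x, R y⁆

/-- The map `θ_R`, measuring the failure of `R` to send `[·, ·]_R` to the original Lie bracket. -/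
def rBracketDefect (x y : L) : L := ⁅R x, R y⁆ - R (rBracket R x y)

theorem map_rBracket (x y : L) : R (rBracket R x y) = ⁅R x, R y⁆ - rBracketDefect R x y :=
  (sub_sub_cancel _ _).symm

theorem rBracket_rBracket (x y z : L) :
    rBracket R (rBracket R x y) z =
      ⁅⁅R x, R y⁆, z⁆ + ⁅⁅R x, y⁆, R z⁆ + ⁅⁅x, R y⁆, R z⁆ - ⁅rBracketDefect R x y, z⁆ :=
  calc rBracket R (rBracket R x y) z
      = ⁅R (rBracket R x y), z⁆ + ⁅⁅R x, y⁆ + ⁅x, R y⁆, R z⁆ := rfl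
    _ = ⁅⁅R x, R y⁆ - rBracketDefect R x y, z⁆ + ⁅⁅R x, y⁆ + ⁅x, R y⁆, R z⁆ := by
        rw [map_rBracket R]
    _ = ⁅⁅R x, R y⁆, z⁆ + ⁅⁅R x, y⁆, R z⁆ + ⁅⁅x, R y⁆, R z⁆ - ⁅rBracketDefect R x y, z⁆ := by
        rw [sub_lie, add_lie]; abel

theorem rBracket_jacobiator (x y z : L) :
    rBracket R (rBracket R x y) z + rBracket R (rBracket R y z) x +
        rBracket R (rBracket R z x) y =
      -(⁅rBracketDefect R x y, z⁆ + ⁅rBracketDefect R y z, x⁆ + ⁅rBracketDefect R z x, y⁆) := by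
  have jacobi_z := lie_jacobi_left (R x) (R y) z
  have jacobi_x := lie_jacobi_left (R y) (R z) x
  have jacobi_y := lie_jacobi_left (R z) (R x) y
  simp only [rBracket_rBracket]
  linear_combination (norm := abel) jacobi_z + jacobi_x + jacobi_y

theorem statement10_general :
    (∀ x y z : L, rBracket R (rBracket R x y) z + rBracket R (rBracket R y z) x +
        rBracket R (rBracket R z x) y = 0) ↔
      ∀ x y z : L, ⁅rBracketDefect R x y, z⁆ + ⁅rBracketDefect R y z, x⁆ +
        ⁅rBracketDefect R z x, y⁆ = 0 := by
  simp only [rBracket_jacobiator, neg_eq_zero]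

end RBracket

/-- Semenov-Tyan-Shanskii: for a linear map `R` on a Lie algebra `g`
over a field of characteristic ≠ 2, the bracket `[x,y]_R = [R x, y] + [x, R y]`
satisfies the Jacobi identity iff
`[θ_R(x,y),z] + [θ_R(y,z),x] + [θ_R(z,x),y] = 0` for all `x,y,z`, where
`θ_R(x,y) = [R x, R y] − R([R x, y] + [x, R y])`. -/
theorem statement10 {F L : Type*} [Field F] [LieRing L] [LieAlgebra F L]
    (h2 : (2 : F) ≠ 0) (R : L →ₗ[F] L) :
    let bR : L → L → L := fun x y => ⁅R x, y⁆ + ⁅x, R y⁆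
    let θ : L → L → L := fun x y => ⁅R x, R y⁆ - R (⁅R x, y⁆ + ⁅x, R y⁆)
    (∀ x y z : L, bR (bR x y) z + bR (bR y z) x + bR (bR z x) y = 0) ↔
    (∀ x y z : L, ⁅θ x y, z⁆ + ⁅θ y z, x⁆ + ⁅θ z x, y⁆ = 0) := by
  exact statement10_general R
end

section
/- Let (g,ω) be a quadratic finite-dimensional Lie algebra over a field F of characteristic different from 2, where g is perfect and has trivial center Z(g) = 0, let R : g → g be a linear map skew-adjoint with respect to ω, and define θ(x,y) = [R(x),R(y)] − R([R(x),y] + [x,R(y)]). Then the bracket [x,y]_R = [R(x),y] + [x,R(y)] satisfies the Jacobi identity (equivalently, by the paper's Propositions 2, 3 and 5, the pair (g,δ_r) associated to R is a Lie bialgebra) if and only if there exists a centrum map ν ∈ Cent(g) such that θ(x,y) = ν([x,y]) for all x,y ∈ g. -/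
/-!
Write `θ` for the Yang–Baxter defect of `R` and `A x y z w = ω (θ x y) ⁅z, w⁆`. The Jacobiator of
`[·,·]_R` is the cyclic sum of `⁅z, θ x y⁆`, so for invariant nondegenerate `ω` the Jacobi identity
is the Bianchi identity of `A`; as for a Riemann curvature tensor, it implies
`A x y z w = A z w x y`. Since brackets span the algebra, this pair symmetry shows that `∑ θ xᵢ yᵢ`
depends only on `∑ ⁅xᵢ, yᵢ⁆`, hence `θ x y = ν ⁅x, y⁆` for a linear map `ν` such that `ω (ν u) v` is
symmetric. Skew-adjointness of `R` makes `ω (θ x y) z` cyclic, and then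
`ω (ν ⁅x, y⁆) z = ω (ν ⁅z, x⁆) y = ω (ν y) ⁅z, x⁆ = ω ⁅x, ν y⁆ z`, so `ν` is a centrum map.
Conversely a centrum map carries the Jacobi identity of the Lie algebra to that of `[·,·]_R`.
-/

open TensorProduct

theorem pair_symm_of_bianchi {X M : Type*} [AddCommGroup M] (h2 : IsSMulRegular M (2 : ℕ))
    (A : X → X → X → X → M) (hleft : ∀ x y z w, A x y z w = -A y x z w)
    (hright : ∀ x y z w, A x y z w = -A x y w z)
    (hbianchi : ∀ x y z w, A x y z w + A y z x w + A z x y w = 0) (x y z w : X) :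
    A x y z w = A z w x y := by
  apply h2
  -- Signs are chosen so that all but the two pairings of `{x, y}` with `{z, w}` cancel in the four
  -- Bianchi identities.
  linear_combination (norm := module)
    hbianchi x y z w + hbianchi y z w x - hbianchi z w x y - hbianchi w x y z
      - hright y z x w - hright z w y x + hright w x z y + hright x y z w
      - hleft z x y w + hright x z w y - hleft w y z x + hright y w x z

section PairingSymmetry

variable {F V W M : Type*} [CommRing F] [AddCommGroup V] [Module F V] [AddCommGroup W] [Module F W]
  [AddCommGroup M] [Module F M] {ω : W →ₗ[F] V →ₗ[F] M}

theorem pairing_lift_symm {A B : Type*} [AddCommGroup A] [Module F A] [AddCommGroup B] [Module F B]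
    {β : A →ₗ[F] B →ₗ[F] V} {T : A →ₗ[F] B →ₗ[F] W}
    (hsymm : ∀ x y z w, ω (T x y) (β z w) = ω (T z w) (β x y)) (p q : A ⊗[F] B) :
    ω (lift T p) (lift β q) = ω (lift T q) (lift β p) := by
  induction p with
  | zero => simp
  | add p p' hp hp' => simp only [map_add, LinearMap.add_apply, hp, hp']
  | tmul x y =>
    induction q with
    | zero => simp
    | add q q' hq hq' => simp only [map_add, LinearMap.add_apply, hq, hq']
    | tmul z w => simpa only [lift.tmul] using hsymm x y z w

theorem exists_comp_eq_of_pairing_symm {P : Type*} [AddCommGroup P] [Module F P]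
    (hω : ω.SeparatingLeft) {β : P →ₗ[F] V} (hβ : Function.Surjective β) {T : P →ₗ[F] W}
    (hsymm : ∀ p q, ω (T p) (β q) = ω (T q) (β p)) :
    ∃ ν : V →ₗ[F] W, ν ∘ₗ β = T := by
  have hker : LinearMap.ker β ≤ LinearMap.ker T := by
    refine fun p hp => hω _ fun v => ?_
    obtain ⟨q, rfl⟩ := hβ v
    rw [hsymm, LinearMap.mem_ker.mp hp, map_zero]
  refine ⟨(LinearMap.ker β).liftQ T hker ∘ₗ (β.quotKerEquivOfSurjective hβ).symm, ?_⟩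
  ext p
  simp

end PairingSymmetry

section LieAlgebra

variable {F L : Type*} [CommRing F] [LieRing L] [LieAlgebra F L]

theorem lift_toEnd_surjective
    (hperf : Submodule.span F {w : L | ∃ x y : L, w = ⁅x, y⁆} = ⊤) :
    Function.Surjective (lift (LieModule.toEnd F L L : L →ₗ[F] L →ₗ[F] L)) := by
  rw [← LinearMap.range_eq_top, eq_top_iff, ← hperf, Submodule.span_le]
  rintro _ ⟨x, y, rfl⟩
  exact ⟨x ⊗ₜ y, rfl⟩

section InvariantForm

variable {M : Type*} [AddCommGroup M] [Module F M] {ω : L →ₗ[F] L →ₗ[F] M}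

theorem form_lie_rotate (hinv : ∀ a b c : L, ω ⁅a, b⁆ c = ω a ⁅b, c⁆) (a b c : L) :
    ω ⁅a, b⁆ c = ω ⁅c, a⁆ b := by
  rw [hinv, ← lie_skew, map_neg, ← hinv, ← LinearMap.neg_apply, ← map_neg, lie_skew]

theorem form_lie_pair_symm (h2 : IsSMulRegular M (2 : ℕ))
    (hinv : ∀ a b c : L, ω ⁅a, b⁆ c = ω a ⁅b, c⁆) {θ : L → L → L}
    (hskew : ∀ x y, θ x y = -θ y x)
    (hjac : ∀ x y z, ⁅z, θ x y⁆ + ⁅x, θ y z⁆ + ⁅y, θ z x⁆ = 0) (x y z w : L) :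
    ω (θ x y) ⁅z, w⁆ = ω (θ z w) ⁅x, y⁆ := by
  refine pair_symm_of_bianchi h2 (fun x y z w => ω (θ x y) ⁅z, w⁆) (fun x y z w => ?_)
    (fun x y z w => ?_) (fun x y z w => ?_) x y z w
  · simp only [hskew x y, map_neg, LinearMap.neg_apply]
  · simp only [← lie_skew z w, map_neg]
  · have h := congrArg (fun u => ω u w) (hjac x y z)
    simp only [← lie_skew _ (θ _ _), map_add, map_neg, map_zero, LinearMap.add_apply,
      LinearMap.neg_apply, LinearMap.zero_apply, ← hinv] at h ⊢
    linear_combination (norm := module) -h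

theorem exists_lieModuleHom_lie_eq
    (hperf : Submodule.span F {w : L | ∃ x y : L, w = ⁅x, y⁆} = ⊤) (hω : ω.SeparatingLeft)
    (hinv : ∀ a b c : L, ω ⁅a, b⁆ c = ω a ⁅b, c⁆) {θ : L →ₗ[F] L →ₗ[F] L}
    (hcyc : ∀ x y z, ω (θ x y) z = ω (θ y z) x)
    (hpair : ∀ x y z w, ω (θ x y) ⁅z, w⁆ = ω (θ z w) ⁅x, y⁆) :
    ∃ ν : L →ₗ⁅F,L⁆ L, ∀ x y, ν ⁅x, y⁆ = θ x y := by
  let ad : L →ₗ[F] L →ₗ[F] L := LieModule.toEnd F L L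
  have hsurj : Function.Surjective (lift ad) := lift_toEnd_surjective hperf
  have hsymm : ∀ p q, ω (lift θ p) (lift ad q) = ω (lift θ q) (lift ad p) :=
    pairing_lift_symm hpair
  obtain ⟨ν, hν⟩ := exists_comp_eq_of_pairing_symm hω hsurj hsymm
  have hνθ (x y : L) : ν ⁅x, y⁆ = θ x y := LinearMap.congr_fun hν (x ⊗ₜ y)
  have hνsymm (u v : L) : ω (ν u) v = ω (ν v) u := by
    obtain ⟨p, rfl⟩ := hsurj u
    obtain ⟨q, rfl⟩ := hsurj v
    simpa only [← hν, LinearMap.comp_apply] using hsymm p q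
  refine ⟨{ ν with map_lie' := fun {x y} => sub_eq_zero.mp (hω _ fun z => ?_) }, hνθ⟩
  rw [map_sub, LinearMap.sub_apply, sub_eq_zero]
  calc ω (ν ⁅x, y⁆) z = ω (ν ⁅z, x⁆) y := by rw [hνθ, hνθ, hcyc z x y]
    _ = ω (ν y) ⁅z, x⁆ := hνsymm _ _
    _ = ω ⁅ν y, z⁆ x := (hinv _ _ _).symm
    _ = ω ⁅x, ν y⁆ z := form_lie_rotate hinv _ _ _

end InvariantForm

/-- The bilinear map `[x, y]_R = [R x, y] + [x, R y]`; it need not be a Lie bracket. -/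
def modifiedBracket (R : L →ₗ[F] L) : L →ₗ[F] L →ₗ[F] L :=
  (LieModule.toEnd F L L : L →ₗ[F] L →ₗ[F] L) ∘ₗ R +
    (LieModule.toEnd F L L : L →ₗ[F] L →ₗ[F] L).compl₂ R

theorem modifiedBracket_apply (R : L →ₗ[F] L) (x y : L) :
    modifiedBracket R x y = ⁅R x, y⁆ + ⁅x, R y⁆ := rfl

/-- The bilinear map `θ(x, y) = [R x, R y] - R [x, y]_R`, which vanishes exactly when `R` solves the
classical Yang–Baxter equation in operator form. -/
def yangBaxterDefect (R : L →ₗ[F] L) : L →ₗ[F] L →ₗ[F] L :=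
  (LieModule.toEnd F L L : L →ₗ[F] L →ₗ[F] L).compl₁₂ R R - (modifiedBracket R).compr₂ R

theorem yangBaxterDefect_apply (R : L →ₗ[F] L) (x y : L) :
    yangBaxterDefect R x y = ⁅R x, R y⁆ - R (⁅R x, y⁆ + ⁅x, R y⁆) := rfl

theorem yangBaxterDefect_swap (R : L →ₗ[F] L) (x y : L) :
    yangBaxterDefect R x y = -yangBaxterDefect R y x := by
  rw [yangBaxterDefect_apply, yangBaxterDefect_apply, ← lie_skew (R y), ← lie_skew (R y) x,
    ← lie_skew y (R x), ← neg_add, map_neg, add_comm ⁅x, R y⁆]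
  abel

theorem modifiedBracket_jacobiator (R : L →ₗ[F] L) (x y z : L) :
    modifiedBracket R (modifiedBracket R x y) z + modifiedBracket R (modifiedBracket R y z) x +
        modifiedBracket R (modifiedBracket R z x) y =
      ⁅z, yangBaxterDefect R x y⁆ + ⁅x, yangBaxterDefect R y z⁆ +
        ⁅y, yangBaxterDefect R z x⁆ := by
  have expand (x y z : L) : modifiedBracket R (modifiedBracket R x y) z =
      ⁅z, yangBaxterDefect R x y⁆ -
        (⁅z, ⁅R x, R y⁆⁆ + ⁅R z, ⁅R x, y⁆⁆ + ⁅R z, ⁅x, R y⁆⁆) := by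
    rw [modifiedBracket_apply, ← lie_skew _ z, ← lie_skew _ (R z), modifiedBracket_apply,
      yangBaxterDefect_apply, lie_sub z, lie_add (R z)]
    abel
  rw [expand, expand, expand]
  -- The remaining terms are the Jacobi identities of the triples with `R` on two entries.
  linear_combination (norm := abel)
    -lie_jacobi (R x) (R y) z - lie_jacobi (R x) y (R z) - lie_jacobi x (R y) (R z)

theorem form_yangBaxterDefect_rotate {M : Type*} [AddCommGroup M] [Module F M]
    {ω : L →ₗ[F] L →ₗ[F] M} (hinv : ∀ a b c : L, ω ⁅a, b⁆ c = ω a ⁅b, c⁆) {R : L →ₗ[F] L}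
    (hR : ∀ x y : L, ω (R x) y = -ω x (R y)) (x y z : L) :
    ω (yangBaxterDefect R x y) z = ω (yangBaxterDefect R y z) x := by
  have expand (x y z : L) : ω (yangBaxterDefect R x y) z =
      ω ⁅R x, R y⁆ z + ω ⁅R x, y⁆ (R z) + ω ⁅x, R y⁆ (R z) := by
    simp only [yangBaxterDefect_apply, map_sub, map_add, LinearMap.sub_apply,
      LinearMap.add_apply, hR]
    abel
  rw [expand, expand, form_lie_rotate hinv (R y) (R z), form_lie_rotate hinv (R y) z,
    form_lie_rotate hinv y (R z)]
  abel

theorem modifiedBracket_jacobi_of_lieModuleHom {R : L →ₗ[F] L} (ν : L →ₗ⁅F,L⁆ L)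
    (hν : ∀ x y, yangBaxterDefect R x y = ν ⁅x, y⁆) (x y z : L) :
    modifiedBracket R (modifiedBracket R x y) z + modifiedBracket R (modifiedBracket R y z) x +
      modifiedBracket R (modifiedBracket R z x) y = 0 := by
  rw [modifiedBracket_jacobiator, hν, hν, hν, ← LieModuleHom.map_lie, ← LieModuleHom.map_lie,
    ← LieModuleHom.map_lie, ← map_add, ← map_add, lie_jacobi, map_zero]

theorem statement16_general {M : Type*} [AddCommGroup M] [Module F M]
    (h2 : IsSMulRegular M (2 : ℕ))
    (hperf : Submodule.span F {w : L | ∃ x y : L, w = ⁅x, y⁆} = ⊤)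
    (ω : L →ₗ[F] L →ₗ[F] M) (hω : ω.SeparatingLeft)
    (hinv : ∀ a b c : L, ω ⁅a, b⁆ c = ω a ⁅b, c⁆)
    (R : L →ₗ[F] L) (hR : ∀ x y : L, ω (R x) y = -ω x (R y)) :
    (∀ x y z, modifiedBracket R (modifiedBracket R x y) z +
        modifiedBracket R (modifiedBracket R y z) x +
          modifiedBracket R (modifiedBracket R z x) y = 0) ↔
    ∃ ν : L →ₗ[F] L,
      (∀ x y : L, ν ⁅x, y⁆ = ⁅ν x, y⁆ ∧ ν ⁅x, y⁆ = ⁅x, ν y⁆) ∧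
      ∀ x y : L, yangBaxterDefect R x y = ν ⁅x, y⁆ := by
  constructor
  · intro hjac
    simp only [modifiedBracket_jacobiator] at hjac
    have hpair := form_lie_pair_symm h2 hinv (θ := fun x y => yangBaxterDefect R x y)
      (yangBaxterDefect_swap R) hjac
    obtain ⟨ν, hν⟩ := exists_lieModuleHom_lie_eq hperf hω hinv
      (form_yangBaxterDefect_rotate hinv hR) hpair
    refine ⟨ν, fun x y => ⟨?_, ν.map_lie x y⟩, fun x y => (hν x y).symm⟩
    change ν ⁅x, y⁆ = ⁅ν x, y⁆
    rw [← lie_skew, map_neg, ν.map_lie, lie_skew]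
  · rintro ⟨ν, hcentrum, hν⟩
    exact modifiedBracket_jacobi_of_lieModuleHom
      { ν with map_lie' := fun {x y} => (hcentrum x y).2 } hν

end LieAlgebra

/-- Theorem 2: let `(g,ω)` be a quadratic finite-dimensional Lie
algebra over a field of characteristic ≠ 2, with `g` perfect and with trivial
center, and let `R` be skew-adjoint with respect to `ω`. With
`θ(x,y) = [R x, R y] − R([R x, y] + [x, R y])` and `[x,y]_R = [R x, y] + [x, R y]`,
the bracket `[·,·]_R` satisfies the Jacobi identity iff there exists a centrum map
`ν ∈ Cent(g)` with `θ(x,y) = ν([x,y])` for all `x,y`. -/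
theorem statement16 {F L : Type*} [Field F] [LieRing L] [LieAlgebra F L]
    [FiniteDimensional F L]
    (h2 : (2 : F) ≠ 0)
    (hperf : Submodule.span F {w : L | ∃ x y : L, w = ⁅x, y⁆} = ⊤)
    (hZ : ∀ x : L, (∀ y : L, ⁅x, y⁆ = 0) → x = 0)
    (ω : L →ₗ[F] L →ₗ[F] F)
    (hsymm : ∀ x y : L, ω x y = ω y x)
    (hnondeg : ∀ x : L, (∀ y : L, ω x y = 0) → x = 0)
    (hinv : ∀ a b c : L, ω ⁅a, b⁆ c = ω a ⁅b, c⁆)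
    (R : L →ₗ[F] L)
    (hskewadj : ∀ x y : L, ω (R x) y = -ω x (R y)) :
    let bR : L → L → L := fun x y => ⁅R x, y⁆ + ⁅x, R y⁆
    let θ : L → L → L := fun x y => ⁅R x, R y⁆ - R (⁅R x, y⁆ + ⁅x, R y⁆)
    (∀ x y z : L, bR (bR x y) z + bR (bR y z) x + bR (bR z x) y = 0) ↔
    (∃ ν : L →ₗ[F] L,
      (∀ x y : L, ν ⁅x, y⁆ = ⁅ν x, y⁆ ∧ ν ⁅x, y⁆ = ⁅x, ν y⁆) ∧
      (∀ x y : L, θ x y = ν ⁅x, y⁆)) :=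
  statement16_general
    (fun _ _ h => mul_left_cancel₀ h2 (by simpa only [nsmul_eq_mul, Nat.cast_ofNat] using h))
    hperf ω hnondeg hinv R hskewadj
end

section
/- Let g be a Lie algebra over a field F of characteristic different from 2, let μ, η ∈ Cent(g) be centrum maps with η([x,y]) = −2μ([x,y]) for all x,y ∈ g, and let R : g → g be a linear map such that R + μ is a Rota–Baxter operator of weight η. Then [R(x),R(y)] − R([R(x),y] + [x,R(y)]) = −μ(μ([x,y])) for all x,y ∈ g. -/
/-!
A centrum map `μ` commutes with the bracket in either slot, so replacing `R` by `R + μ` creates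
cross terms in `⁅(R + μ) x, (R + μ) y⁆` that cancel against `μ (⁅R x, y⁆ + ⁅x, R y⁆)`. The only
other contributions are `⁅μ x, μ y⁆ = μ (μ ⁅x, y⁆)` and the image of `(2μ + η) ⁅x, y⁆` under
`R + μ`; the condition on the weight makes the latter vanish.
-/

section RotaBaxter

variable {K L : Type*} [CommRing K] [LieRing L] [LieAlgebra K L]

variable (K L) in
/-- Centrum maps of a Lie algebra, encoded as the endomorphisms of its adjoint module: compatibility
with the bracket in the second slot implies compatibility in the first, by skew-symmetry. -/
abbrev CentrumMap : Type _ := L →ₗ⁅K,L⁆ L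

theorem CentrumMap.map_lie_left (μ : CentrumMap K L) (x y : L) : μ ⁅x, y⁆ = ⁅μ x, y⁆ := by
  rw [← lie_skew, map_neg, LieModuleHom.map_lie, lie_skew]

theorem CentrumMap.lie_map_map (μ : CentrumMap K L) (x y : L) : ⁅μ x, μ y⁆ = μ (μ ⁅x, y⁆) := by
  rw [LieModuleHom.map_lie, μ.map_lie_left]

/-- The failure of `S` to satisfy the Rota–Baxter identity of weight `η` at `x, y`. The weight is an
arbitrary linear map, since only its values on brackets enter. -/
def rotaBaxterDefect (η S : L →ₗ[K] L) (x y : L) : L :=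
  ⁅S x, S y⁆ - S (⁅S x, y⁆ + ⁅x, S y⁆ + η ⁅x, y⁆)

/-- Rota–Baxter operators of weight `η` on a Lie algebra, where `η` may be any linear map. -/
def IsRotaBaxterOperator (η S : L →ₗ[K] L) : Prop :=
  ∀ x y : L, ⁅S x, S y⁆ = S (⁅S x, y⁆ + ⁅x, S y⁆ + η ⁅x, y⁆)

theorem isRotaBaxterOperator_iff_defect_eq_zero {η S : L →ₗ[K] L} :
    IsRotaBaxterOperator η S ↔ ∀ x y : L, rotaBaxterDefect η S x y = 0 :=
  forall₂_congr fun _ _ => sub_eq_zero.symm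

theorem rotaBaxterDefect_add_centrumMap (η R : L →ₗ[K] L) (μ : CentrumMap K L) (x y : L) :
    rotaBaxterDefect η (R + μ) x y =
      ⁅R x, R y⁆ - R (⁅R x, y⁆ + ⁅x, R y⁆) + μ (μ ⁅x, y⁆) -
        (R + μ) ((2 : K) • μ ⁅x, y⁆ + η ⁅x, y⁆) := by
  have bracket_expansion : ⁅(R + μ) x, (R + μ) y⁆ =
      ⁅R x, R y⁆ + μ (⁅R x, y⁆ + ⁅x, R y⁆) + μ (μ ⁅x, y⁆) := by
    simp only [LinearMap.add_apply, LieModuleHom.coe_toLinearMap, add_lie, lie_add, map_add]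
    rw [μ.lie_map_map, ← LieModuleHom.map_lie, ← μ.map_lie_left]
    abel
  have argument_expansion : ⁅(R + μ) x, y⁆ + ⁅x, (R + μ) y⁆ + η ⁅x, y⁆ =
      (⁅R x, y⁆ + ⁅x, R y⁆) + ((2 : K) • μ ⁅x, y⁆ + η ⁅x, y⁆) := by
    simp only [LinearMap.add_apply, LieModuleHom.coe_toLinearMap, add_lie, lie_add]
    rw [← LieModuleHom.map_lie, ← μ.map_lie_left]
    module
  have image_expansion : (R + μ) (⁅R x, y⁆ + ⁅x, R y⁆) =
      R (⁅R x, y⁆ + ⁅x, R y⁆) + μ (⁅R x, y⁆ + ⁅x, R y⁆) := rfl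
  rw [rotaBaxterDefect, bracket_expansion, argument_expansion, map_add (R + _), image_expansion]
  abel

theorem statement18_general (η R : L →ₗ[K] L) (μ : CentrumMap K L)
    (hημ : ∀ x y : L, η ⁅x, y⁆ = -(2 : K) • μ ⁅x, y⁆) :
    IsRotaBaxterOperator η (R + μ) ↔
      ∀ x y : L, ⁅R x, R y⁆ - R (⁅R x, y⁆ + ⁅x, R y⁆) = -μ (μ ⁅x, y⁆) := by
  have weight_cancels (x y : L) : (2 : K) • μ ⁅x, y⁆ + η ⁅x, y⁆ = 0 := by
    rw [hημ, neg_smul, add_neg_cancel]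
  simp only [isRotaBaxterOperator_iff_defect_eq_zero, rotaBaxterDefect_add_centrumMap,
    weight_cancels, map_zero, sub_zero, add_eq_zero_iff_eq_neg]

end RotaBaxter

/-- let `g` be a Lie algebra over a field of characteristic ≠ 2,
`μ, η ∈ Cent(g)` with `η([x,y]) = −2μ([x,y])`, and let `R` be a linear map such that
`R + μ` is a Rota–Baxter operator of weight `η`. Then
`[R x, R y] − R([R x, y] + [x, R y]) = −μ²([x,y])` for all `x,y`. -/
theorem statement18 {F L : Type*} [Field F] [LieRing L] [LieAlgebra F L]
    (h2 : (2 : F) ≠ 0)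
    (μ η R : L →ₗ[F] L)
    (hμ : ∀ x y : L, μ ⁅x, y⁆ = ⁅μ x, y⁆ ∧ μ ⁅x, y⁆ = ⁅x, μ y⁆)
    (hη : ∀ x y : L, η ⁅x, y⁆ = ⁅η x, y⁆ ∧ η ⁅x, y⁆ = ⁅x, η y⁆)
    (hημ : ∀ x y : L, η ⁅x, y⁆ = -(2 : F) • μ ⁅x, y⁆)
    (hRB : ∀ x y : L,
      ⁅(R + μ) x, (R + μ) y⁆ =
        (R + μ) (⁅(R + μ) x, y⁆ + ⁅x, (R + μ) y⁆ + η ⁅x, y⁆)) :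
    ∀ x y : L, ⁅R x, R y⁆ - R (⁅R x, y⁆ + ⁅x, R y⁆) = -μ (μ ⁅x, y⁆) :=
  (statement18_general η R { μ with map_lie' := fun {x y} => (hμ x y).2 } hημ).1 hRB
end
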